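/- For every ε̄ ∈ int(E), the invariancy set I_inv = {ε ∈ int(E) : π(ε) = π(ε̄)} is either a singleton or an open interval. -/

import Mathlib

open Matrix Set

noncomputable section

variable {n m : ℕ}

/-- Feasibility for the primal SDO problem `(P_ε)` (the feasible set does not depend on `ε`). -/
def PrimalFeasible (A : Fin m → Matrix (Fin n) (Fin n) ℝ) (b : Fin m → ℝ)
    (X : Matrix (Fin n) (Fin n) ℝ) : Prop :=
  X.IsSymm ∧ (∀ i, ((A i) * X).trace = b i) ∧ X.PosSemidef

/-- Feasibility for the dual SDO problem `(D_ε)`. -/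
def DualFeasible (C Cbar : Matrix (Fin n) (Fin n) ℝ)
    (A : Fin m → Matrix (Fin n) (Fin n) ℝ) (ε : ℝ)
    (y : Fin m → ℝ) (S : Matrix (Fin n) (Fin n) ℝ) : Prop :=
  S.IsSymm ∧ (∑ i, y i • A i) + S = C + ε • Cbar ∧ S.PosSemidef

/-- The optimal value function `v(ε)` of `(P_ε)`, with values in `EReal`. -/
def vfun (C Cbar : Matrix (Fin n) (Fin n) ℝ) (A : Fin m → Matrix (Fin n) (Fin n) ℝ)
    (b : Fin m → ℝ) (ε : ℝ) : EReal :=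
  sInf ((fun X => (((C + ε • Cbar) * X).trace : EReal)) '' {X | PrimalFeasible A b X})

/-- `E = {ε : v(ε) > -∞}`. -/
def Eset (C Cbar : Matrix (Fin n) (Fin n) ℝ) (A : Fin m → Matrix (Fin n) (Fin n) ℝ)
    (b : Fin m → ℝ) : Set ℝ :=
  {ε | ⊥ < vfun C Cbar A b ε}

/-- The primal optimal set `P*(ε)`. -/
def PrimalOpt (C Cbar : Matrix (Fin n) (Fin n) ℝ) (A : Fin m → Matrix (Fin n) (Fin n) ℝ)
    (b : Fin m → ℝ) (ε : ℝ) : Set (Matrix (Fin n) (Fin n) ℝ) :=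
  {X | PrimalFeasible A b X ∧ ∀ X', PrimalFeasible A b X' →
    ((C + ε • Cbar) * X).trace ≤ ((C + ε • Cbar) * X').trace}

/-- The dual optimal set `D*(ε)`. -/
def DualOpt (C Cbar : Matrix (Fin n) (Fin n) ℝ) (A : Fin m → Matrix (Fin n) (Fin n) ℝ)
    (b : Fin m → ℝ) (ε : ℝ) : Set ((Fin m → ℝ) × Matrix (Fin n) (Fin n) ℝ) :=
  {p | DualFeasible C Cbar A ε p.1 p.2 ∧ ∀ y' S', DualFeasible C Cbar A ε y' S' →
    ∑ i, b i * y' i ≤ ∑ i, b i * p.1 i}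

/-- A maximally complementary optimal solution: `X` lies in the relative interior of `P*(ε)`
and `(y, S)` in the relative interior of `D*(ε)`. -/
def MaxComp (C Cbar : Matrix (Fin n) (Fin n) ℝ) (A : Fin m → Matrix (Fin n) (Fin n) ℝ)
    (b : Fin m → ℝ) (ε : ℝ) (X : Matrix (Fin n) (Fin n) ℝ) (y : Fin m → ℝ)
    (S : Matrix (Fin n) (Fin n) ℝ) : Prop :=
  X ∈ intrinsicInterior ℝ (PrimalOpt C Cbar A b ε) ∧
    (y, S) ∈ intrinsicInterior ℝ (DualOpt C Cbar A b ε)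

/-- `π(ε) = π(ε')`: the optimal partitions at `ε` and `ε'` coincide, expressed through
maximally complementary solutions (`B = range X*`, `N = range S*`, `T` being determined
by `B` and `N`). -/
def SamePartition (C Cbar : Matrix (Fin n) (Fin n) ℝ) (A : Fin m → Matrix (Fin n) (Fin n) ℝ)
    (b : Fin m → ℝ) (ε ε' : ℝ) : Prop :=
  ∃ X y S X' y' S', MaxComp C Cbar A b ε X y S ∧ MaxComp C Cbar A b ε' X' y' S' ∧
    LinearMap.range X.mulVecLin = LinearMap.range X'.mulVecLin ∧
    LinearMap.range S.mulVecLin = LinearMap.range S'.mulVecLin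

/-- The standing assumptions: symmetric data, linearly independent constraint matrices and
the interior point condition at `ε = 0`. -/
def StandingAssumptions (C Cbar : Matrix (Fin n) (Fin n) ℝ)
    (A : Fin m → Matrix (Fin n) (Fin n) ℝ) (b : Fin m → ℝ) : Prop :=
  C.IsSymm ∧ Cbar.IsSymm ∧ (∀ i, (A i).IsSymm) ∧ LinearIndependent ℝ A ∧
    ∃ X y S, PrimalFeasible A b X ∧ X.PosDef ∧ DualFeasible C Cbar A 0 y S ∧ S.PosDef

/-- The invariancy set of `ε̄`. -/
def InvSet (C Cbar : Matrix (Fin n) (Fin n) ℝ) (A : Fin m → Matrix (Fin n) (Fin n) ℝ)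
    (b : Fin m → ℝ) (εbar : ℝ) : Set ℝ :=
  {ε | ε ∈ interior (Eset C Cbar A b) ∧ SamePartition C Cbar A b ε εbar}

/-- `dim B(ε) = dim B(ε')` and `dim N(ε) = dim N(ε')`, expressed through maximally
complementary solutions. -/
def DimsMatch (C Cbar : Matrix (Fin n) (Fin n) ℝ) (A : Fin m → Matrix (Fin n) (Fin n) ℝ)
    (b : Fin m → ℝ) (ε ε' : ℝ) : Prop :=
  ∀ X y S X' y' S', MaxComp C Cbar A b ε X y S → MaxComp C Cbar A b ε' X' y' S' →
    Module.finrank ℝ (LinearMap.range X.mulVecLin) =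
        Module.finrank ℝ (LinearMap.range X'.mulVecLin) ∧
      Module.finrank ℝ (LinearMap.range S.mulVecLin) =
        Module.finrank ℝ (LinearMap.range S'.mulVecLin)

/-- A transition point: a singleton invariancy set such that every neighborhood contains a
parameter at which `dim B` or `dim N` differs. -/
def IsTransitionPoint (C Cbar : Matrix (Fin n) (Fin n) ℝ) (A : Fin m → Matrix (Fin n) (Fin n) ℝ)
    (b : Fin m → ℝ) (εbar : ℝ) : Prop :=
  εbar ∈ interior (Eset C Cbar A b) ∧
    (∀ ε ∈ interior (Eset C Cbar A b), ε ≠ εbar → ¬ SamePartition C Cbar A b ε εbar) ∧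
    ∀ ξ : ℝ, 0 < ξ → ∃ ε ∈ Set.Ioo (εbar - ξ) (εbar + ξ) ∩ interior (Eset C Cbar A b),
      ¬ DimsMatch C Cbar A b ε εbar

/-- Existence of a strictly complementary optimal solution at `ε`. -/
def HasStrictComp (C Cbar : Matrix (Fin n) (Fin n) ℝ) (A : Fin m → Matrix (Fin n) (Fin n) ℝ)
    (b : Fin m → ℝ) (ε : ℝ) : Prop :=
  ∃ X y S, X ∈ PrimalOpt C Cbar A b ε ∧ (y, S) ∈ DualOpt C Cbar A b ε ∧ (X + S).PosDef

/-- Nonsingularity of the Jacobian `J(X, y, S)` of the optimality system, as a linear map on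
`S^n × ℝ^m × S^n`: only the trivial symmetric triple is mapped to zero. -/
def JNonsingular (A : Fin m → Matrix (Fin n) (Fin n) ℝ)
    (X S : Matrix (Fin n) (Fin n) ℝ) : Prop :=
  ∀ (DX DS : Matrix (Fin n) (Fin n) ℝ) (Dy : Fin m → ℝ), DX.IsSymm → DS.IsSymm →
    (∀ i, ((A i) * DX).trace = 0) → ((∑ i, Dy i • A i) + DS = 0) →
    (DX * S + S * DX + X * DS + DS * X = 0) → DX = 0 ∧ Dy = 0 ∧ DS = 0

/-- Primal nondegeneracy of a primal feasible `X`. -/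
def PrimalNondeg (A : Fin m → Matrix (Fin n) (Fin n) ℝ)
    (X : Matrix (Fin n) (Fin n) ℝ) : Prop :=
  ∃ (r : ℕ) (M₁ : Matrix (Fin n) (Fin r) ℝ) (M₂ : Matrix (Fin n) (Fin (n - r)) ℝ),
    M₁ᵀ * M₁ = 1 ∧ M₂ᵀ * M₂ = 1 ∧ M₁ᵀ * M₂ = 0 ∧
    LinearMap.range M₁.mulVecLin = LinearMap.range X.mulVecLin ∧
    LinearIndependent ℝ (fun i =>
      Matrix.fromBlocks (M₁ᵀ * (A i) * M₁) (M₁ᵀ * (A i) * M₂) (M₂ᵀ * (A i) * M₁) 0)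

/-- Dual nondegeneracy of a dual feasible `(y, S)` (the condition involves only `S`). -/
def DualNondeg (A : Fin m → Matrix (Fin n) (Fin n) ℝ)
    (S : Matrix (Fin n) (Fin n) ℝ) : Prop :=
  ∃ (k : ℕ) (N₁ : Matrix (Fin n) (Fin k) ℝ),
    N₁ᵀ * N₁ = 1 ∧ LinearMap.range N₁.mulVecLin = LinearMap.ker S.mulVecLin ∧
    ∀ W : Matrix (Fin k) (Fin k) ℝ, W.IsSymm →
      W ∈ Submodule.span ℝ (Set.range fun i => N₁ᵀ * (A i) * N₁)

/-- A central solution with parameter `μ` for the problems `(P_ε)` and `(D_ε)`. -/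
def CentralSol (C Cbar : Matrix (Fin n) (Fin n) ℝ) (A : Fin m → Matrix (Fin n) (Fin n) ℝ)
    (b : Fin m → ℝ) (ε μ : ℝ) (X : Matrix (Fin n) (Fin n) ℝ) (y : Fin m → ℝ)
    (S : Matrix (Fin n) (Fin n) ℝ) : Prop :=
  PrimalFeasible A b X ∧ DualFeasible C Cbar A ε y S ∧
    X * S = μ • (1 : Matrix (Fin n) (Fin n) ℝ)

/-- The Frobenius norm of a matrix. -/
def frobNorm {α β : Type*} [Fintype α] [Fintype β] (M : Matrix α β ℝ) : ℝ :=
  Real.sqrt (∑ i, ∑ j, (M i j) ^ 2)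

/-- The spectral norm (induced 2-norm) of a square matrix. -/
def specNorm {N : ℕ} (M : Matrix (Fin N) (Fin N) ℝ) : ℝ :=
  ‖LinearMap.toContinuousLinearMap (Matrix.toEuclideanLin M)‖

/-- The smallest eigenvalue of a symmetric matrix, via the Rayleigh quotient. -/
def lamMin {k : ℕ} (M : Matrix (Fin k) (Fin k) ℝ) : ℝ :=
  sInf {r : ℝ | ∃ x : Fin k → ℝ, (∑ i, (x i) ^ 2) = 1 ∧ r = x ⬝ᵥ M.mulVec x}

/-- `θ^μ`: the operator norm of the inverse of the Jacobian `J(X, y, S)` on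
`S^n × ℝ^m × S^n`, characterized as the least constant `t ≥ 0` with
`‖(ΔX, Δy, ΔS)‖ ≤ t * ‖J(X,y,S)(ΔX, Δy, ΔS)‖` for all symmetric `ΔX`, `ΔS`. -/
def thetaMu (A : Fin m → Matrix (Fin n) (Fin n) ℝ)
    (X S : Matrix (Fin n) (Fin n) ℝ) : ℝ :=
  sInf {t : ℝ | 0 ≤ t ∧ ∀ (DX DS : Matrix (Fin n) (Fin n) ℝ) (Dy : Fin m → ℝ),
    DX.IsSymm → DS.IsSymm →
    Real.sqrt (frobNorm DX ^ 2 + (∑ i, (Dy i) ^ 2) + frobNorm DS ^ 2) ≤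
      t * Real.sqrt ((∑ i, (((A i) * DX).trace) ^ 2) +
        frobNorm ((∑ i, Dy i • A i) + DS) ^ 2 +
        frobNorm ((1 / 2 : ℝ) • (DX * S + S * DX + X * DS + DS * X)) ^ 2)}

/-- A nonlinearity interval: a non-singleton open subinterval of `int(E)`, of maximal length,
on which `dim B(·)` and `dim N(·)` are constant while the optimal partition `π(·)` varies. -/
def IsNonlinearityInterval (C Cbar : Matrix (Fin n) (Fin n) ℝ)
    (A : Fin m → Matrix (Fin n) (Fin n) ℝ) (b : Fin m → ℝ) (I : Set ℝ) : Prop :=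
  I ⊆ interior (Eset C Cbar A b) ∧ IsOpen I ∧ I.OrdConnected ∧
    (∃ a ∈ I, ∃ c ∈ I, a ≠ c) ∧
    (∀ ε ∈ I, ∀ ε' ∈ I, DimsMatch C Cbar A b ε ε') ∧
    ¬ (∀ ε ∈ I, ∀ ε' ∈ I, SamePartition C Cbar A b ε ε') ∧
    ∀ I' : Set ℝ, I ⊆ I' → I' ⊆ interior (Eset C Cbar A b) → IsOpen I' → I'.OrdConnected →
      (∀ ε ∈ I', ∀ ε' ∈ I', DimsMatch C Cbar A b ε ε') → I' = I

end

section helpers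

open Topology

lemma aux_ri_ext {V : Type*} [AddCommGroup V] [Module ℝ V] [TopologicalSpace V]
    [IsTopologicalAddGroup V] [ContinuousSMul ℝ V] {s : Set V} {x x' : V}
    (hx : x ∈ intrinsicInterior ℝ s) (hx' : x' ∈ s) :
    ∃ δ : ℝ, 0 < δ ∧ x + δ • (x - x') ∈ s := by
  rw [mem_intrinsicInterior] at hx
  obtain ⟨y, hy, rfl⟩ := hx
  have hmem : ∀ t : ℝ, (y : V) + t • ((y : V) - x') ∈ affineSpan ℝ s := by
    intro t
    have h := AffineMap.lineMap_mem (1 + t) (subset_affineSpan ℝ s hx') y.2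
    have e : AffineMap.lineMap x' (y : V) (1 + t) = (y : V) + t • ((y : V) - x') := by
      rw [AffineMap.lineMap_apply]
      simp only [vsub_eq_sub, vadd_eq_add, add_smul, one_smul]
      abel
    rwa [e] at h
  let g : ℝ → affineSpan ℝ s := fun t => ⟨_, hmem t⟩
  have hg : Continuous g := by
    apply Continuous.subtype_mk
    fun_prop
  have hg0 : g 0 = y := by
    apply Subtype.ext
    simp [g]
  have hev : ∀ᶠ t in 𝓝 (0 : ℝ), g t ∈ interior ((↑) ⁻¹' s : Set (affineSpan ℝ s)) := by
    apply hg.continuousAt.eventually_mem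
    rw [hg0]
    exact isOpen_interior.mem_nhds hy
  obtain ⟨η, hη, h⟩ := Metric.eventually_nhds_iff.1 hev
  refine ⟨η / 2, by linarith, ?_⟩
  have := interior_subset (h (y := η / 2) (by
    rw [Real.dist_eq, sub_zero, abs_of_pos (by linarith)]; linarith))
  exact this

lemma aux_factor {n : ℕ} {S : Matrix (Fin n) (Fin n) ℝ} (h : S.PosSemidef) :
    ∃ R : Matrix (Fin n) (Fin n) ℝ, S = Rᵀ * R := by
  open scoped MatrixOrder Matrix.Norms.L2Operator in
  obtain ⟨B, hB⟩ := CStarAlgebra.nonneg_iff_eq_star_mul_self.mp h.nonneg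
  exact ⟨B, by rw [hB, Matrix.star_eq_conjTranspose, Matrix.conjTranspose_eq_transpose_of_trivial]⟩

lemma aux_psd_iff {n : ℕ} {S : Matrix (Fin n) (Fin n) ℝ} :
    S.PosSemidef ↔ S.IsSymm ∧ ∀ x : Fin n → ℝ, 0 ≤ x ⬝ᵥ (S *ᵥ x) := by
  rw [Matrix.posSemidef_iff_dotProduct_mulVec, Matrix.IsHermitian,
    Matrix.conjTranspose_eq_transpose_of_trivial, Matrix.IsSymm]
  simp

lemma aux_zero {n : ℕ} {S : Matrix (Fin n) (Fin n) ℝ} (h : S.PosSemidef) {x : Fin n → ℝ}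
    (hx : x ⬝ᵥ (S *ᵥ x) ≤ 0) : S *ᵥ x = 0 := by
  have := (h.dotProduct_mulVec_zero_iff x).1
  apply this
  have h2 := (aux_psd_iff.1 h).2 x
  simpa using le_antisymm hx h2

/-- kernel inclusion gives a factorization -/
lemma aux_ker_factor {n : ℕ} {S T : Matrix (Fin n) (Fin n) ℝ}
    (h : ∀ v, S *ᵥ v = 0 → T *ᵥ v = 0) : ∃ G : Matrix (Fin n) (Fin n) ℝ, T = G * S := by
  obtain ⟨s, hs⟩ := S.mulVecLin.rangeRestrict.exists_rightInverse_of_surjective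
    (LinearMap.range_rangeRestrict _)
  obtain ⟨g, hg⟩ := (T.mulVecLin.comp s).exists_extend
  refine ⟨LinearMap.toMatrix' g, ?_⟩
  apply Matrix.toLin'.injective
  ext1 i
  refine LinearMap.ext fun c => ?_
  simp only [LinearMap.comp_apply, Matrix.toLin'_mul, Matrix.toLin'_toMatrix', Matrix.toLin'_apply]
  generalize (LinearMap.single ℝ (fun _ => ℝ) i) c = v
  have h1 := LinearMap.congr_fun hg (S.mulVecLin.rangeRestrict v)
  have h2 := LinearMap.congr_fun hs (S.mulVecLin.rangeRestrict v)
  simp only [LinearMap.comp_apply, Submodule.subtype_apply, LinearMap.id_apply] at h1 h2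
  have h3 := congrArg Subtype.val h2
  change S *ᵥ (s (S.mulVecLin.rangeRestrict v)) = S *ᵥ v at h3
  change g (S *ᵥ v) = T *ᵥ s (S.mulVecLin.rangeRestrict v) at h1
  rw [h1]
  have h4 := h (v - s (S.mulVecLin.rangeRestrict v)) (by
    rw [Matrix.mulVec_sub, h3, sub_self])
  rw [Matrix.mulVec_sub] at h4
  exact sub_eq_zero.1 h4

lemma aux_range_le {n : ℕ} {S T : Matrix (Fin n) (Fin n) ℝ} (hS : S.IsSymm) (hT : T.IsSymm)
    (h : ∀ v, S *ᵥ v = 0 → T *ᵥ v = 0) :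
    LinearMap.range T.mulVecLin ≤ LinearMap.range S.mulVecLin := by
  obtain ⟨G, hG⟩ := aux_ker_factor h
  have : T = S * Gᵀ := by
    rw [← hT.eq, hG, Matrix.transpose_mul, hS.eq]
  rintro _ ⟨v, rfl⟩
  exact ⟨Gᵀ *ᵥ v, by rw [Matrix.mulVecLin_apply, Matrix.mulVec_mulVec, ← this, Matrix.mulVecLin_apply]⟩

lemma aux_ker_le {n : ℕ} {S T : Matrix (Fin n) (Fin n) ℝ} (hS : S.IsSymm) (hT : T.IsSymm)
    (h : LinearMap.range T.mulVecLin ≤ LinearMap.range S.mulVecLin) (v : Fin n → ℝ)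
    (hv : S *ᵥ v = 0) : T *ᵥ v = 0 := by
  apply dotProduct_self_eq_zero.1
  obtain ⟨w, hw⟩ := h ⟨T *ᵥ v, rfl⟩
  simp only [Matrix.mulVecLin_apply] at hw
  have e1 : (T *ᵥ v) ⬝ᵥ (T *ᵥ v) = v ⬝ᵥ (T *ᵥ (T *ᵥ v)) := by
    rw [Matrix.dotProduct_mulVec v, ← Matrix.mulVec_transpose, hT.eq]
  rw [e1, ← hw, Matrix.dotProduct_mulVec v, ← Matrix.mulVec_transpose, hS.eq, hv, zero_dotProduct]

lemma aux_dominate {n : ℕ} {S T : Matrix (Fin n) (Fin n) ℝ} (hS : S.PosSemidef)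
    (hT : T.PosSemidef) (h : ∀ v, S *ᵥ v = 0 → T *ᵥ v = 0) :
    ∃ δ : ℝ, 0 < δ ∧ ∀ d, d ≤ δ → (S - d • T).PosSemidef := by
  obtain ⟨R, rfl⟩ := aux_factor hS
  obtain ⟨Q, rfl⟩ := aux_factor hT
  have q : ∀ (R : Matrix (Fin n) (Fin n) ℝ) v, v ⬝ᵥ ((Rᵀ * R) *ᵥ v) = (R *ᵥ v) ⬝ᵥ (R *ᵥ v) := by
    intro R v
    rw [← Matrix.mulVec_mulVec, Matrix.dotProduct_mulVec, Matrix.vecMul_transpose]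
  have hk : ∀ v, R *ᵥ v = 0 → Q *ᵥ v = 0 := by
    intro v hv
    have := h v (by rw [← Matrix.mulVec_mulVec, hv, Matrix.mulVec_zero])
    have h2 := q Q v
    rw [this, dotProduct_zero] at h2
    exact dotProduct_self_eq_zero.1 h2.symm
  obtain ⟨G, rfl⟩ := aux_ker_factor hk
  set c : ℝ := ∑ i, ∑ j, G i j ^ 2 with hc
  have hc0 : 0 ≤ c := Finset.sum_nonneg fun i _ => Finset.sum_nonneg fun j _ => sq_nonneg _
  have hG : ∀ w, (G *ᵥ w) ⬝ᵥ (G *ᵥ w) ≤ c * (w ⬝ᵥ w) := by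
    intro w
    rw [hc, Finset.sum_mul]
    unfold dotProduct
    apply Finset.sum_le_sum
    intro i _
    have := Finset.sum_mul_sq_le_sq_mul_sq Finset.univ (fun j => G i j) w
    calc (G *ᵥ w) i * (G *ᵥ w) i = (∑ j, G i j * w j) ^ 2 := by
          rw [sq]; rfl
      _ ≤ _ := this
      _ = _ := by simp only [sq]
  refine ⟨1 / (c + 1), by positivity, fun d hd => aux_psd_iff.2 ⟨?_, fun v => ?_⟩⟩
  · simp [Matrix.IsSymm, Matrix.transpose_sub, Matrix.transpose_smul, Matrix.transpose_mul]
  · rw [Matrix.sub_mulVec, Matrix.smul_mulVec, dotProduct_sub, dotProduct_smul, q, q,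
      ← Matrix.mulVec_mulVec, smul_eq_mul]
    have h1 := hG (R *ᵥ v)
    have h2 : 0 ≤ (R *ᵥ v) ⬝ᵥ (R *ᵥ v) := by
      simpa using dotProduct_star_self_nonneg (R *ᵥ v)
    have h3 : 0 ≤ (G *ᵥ (R *ᵥ v)) ⬝ᵥ (G *ᵥ (R *ᵥ v)) := by
      simpa using dotProduct_star_self_nonneg (G *ᵥ (R *ᵥ v))
    have h4 : 1 / (c + 1) * ((G *ᵥ (R *ᵥ v)) ⬝ᵥ (G *ᵥ (R *ᵥ v))) ≤ (R *ᵥ v) ⬝ᵥ (R *ᵥ v) := by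
      rw [div_mul_eq_mul_div, one_mul, div_le_iff₀ (by positivity)]
      nlinarith
    nlinarith [mul_le_mul_of_nonneg_right hd h3]

lemma aux_trace_nonneg {n : ℕ} {S X : Matrix (Fin n) (Fin n) ℝ} (hS : S.PosSemidef)
    (hX : X.PosSemidef) : 0 ≤ (S * X).trace := by
  obtain ⟨R, rfl⟩ := aux_factor hS
  have := (hX.mul_mul_conjTranspose_same R).trace_nonneg
  rw [Matrix.conjTranspose_eq_transpose_of_trivial] at this
  rwa [Matrix.mul_assoc, Matrix.trace_mul_comm]

lemma aux_trace_zero {n : ℕ} {S X : Matrix (Fin n) (Fin n) ℝ} (hS : S.PosSemidef)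
    (hX : X.PosSemidef) (h : (S * X).trace = 0) : S * X = 0 := by
  obtain ⟨R, rfl⟩ := aux_factor hS
  obtain ⟨Q, rfl⟩ := aux_factor hX
  have h1 : ((R * Qᵀ)ᴴ * (R * Qᵀ)).trace = 0 := by
    rw [Matrix.conjTranspose_eq_transpose_of_trivial, Matrix.transpose_mul,
      Matrix.transpose_transpose, Matrix.mul_assoc, Matrix.trace_mul_comm, ← h]
    simp only [Matrix.mul_assoc]
  have h2 := Matrix.trace_conjTranspose_mul_self_eq_zero_iff.1 h1
  calc Rᵀ * R * (Qᵀ * Q) = Rᵀ * (R * Qᵀ) * Q := by simp only [Matrix.mul_assoc]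
    _ = 0 := by rw [h2]; simp

lemma aux_posDef_ker {n : ℕ} {S : Matrix (Fin n) (Fin n) ℝ} (hS : S.PosDef) (v : Fin n → ℝ)
    (hv : S *ᵥ v = 0) : v = 0 := by
  by_contra hne
  have := hS.dotProduct_mulVec_pos hne
  simp [hv] at this

lemma aux_posDef_dom {n : ℕ} {S : Matrix (Fin n) (Fin n) ℝ} (hS : S.PosDef) :
    ∃ δ : ℝ, 0 < δ ∧ (S - δ • (1 : Matrix (Fin n) (Fin n) ℝ)).PosSemidef := by
  obtain ⟨δ, h, h2⟩ := aux_dominate hS.posSemidef Matrix.PosSemidef.one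
    (fun v hv => by rw [aux_posDef_ker hS v hv]; simp)
  exact ⟨δ, h, h2 δ le_rfl⟩

lemma aux_interior {n : ℕ} {S : Matrix (Fin n) (Fin n) ℝ} (hS : S.PosDef) :
    S ∈ interior {X : Matrix (Fin n) (Fin n) ℝ | ∀ x, 0 ≤ x ⬝ᵥ (X *ᵥ x)} := by
  obtain ⟨δ, hδ, h⟩ := aux_posDef_dom hS
  set η : ℝ := δ / (n + 1) with hη
  have hη0 : 0 < η := by positivity
  have hηn : η * n ≤ δ := by
    rw [hη, div_mul_eq_mul_div, div_le_iff₀ (by positivity)]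
    nlinarith
  rw [mem_interior]
  refine ⟨{X | ∀ i j, |X i j - S i j| < η}, ?_, ?_, by simp [hη0]⟩
  · intro X hX x
    have h1 := (aux_psd_iff.1 h).2 x
    rw [Matrix.sub_mulVec, Matrix.smul_mulVec, dotProduct_sub, dotProduct_smul, smul_eq_mul,
      Matrix.one_mulVec] at h1
    have h2 : x ⬝ᵥ (X *ᵥ x) = x ⬝ᵥ (S *ᵥ x) + ∑ i, ∑ j, x i * (X i j - S i j) * x j := by
      simp only [dotProduct, Matrix.mulVec, Finset.mul_sum]
      rw [← Finset.sum_add_distrib]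
      refine Finset.sum_congr rfl fun i _ => ?_
      rw [← Finset.sum_add_distrib]
      refine Finset.sum_congr rfl fun j _ => ?_
      ring
    have h3 : ∑ i, ∑ j, x i * (X i j - S i j) * x j
        ≥ ∑ i : Fin n, ∑ j : Fin n, (-(η * ((x i * x i + x j * x j) / 2))) := by
      refine Finset.sum_le_sum fun i _ => Finset.sum_le_sum fun j _ => ?_
      have hh := hX i j
      rw [abs_lt] at hh
      obtain ⟨l, u⟩ := hh
      nlinarith [sq_nonneg (x i - x j), sq_nonneg (x i + x j)]
    have h4 : ∑ i : Fin n, ∑ j : Fin n, (-(η * ((x i * x i + x j * x j) / 2)))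
        = - (η * n * (x ⬝ᵥ x)) := by
      simp only [dotProduct, Finset.sum_neg_distrib, ← Finset.mul_sum, ← Finset.sum_div,
        Finset.sum_add_distrib, Finset.sum_const, Finset.card_univ, Fintype.card_fin,
        nsmul_eq_mul]
      have e : ∑ i, x i * (↑n * x i) = n * ∑ i, x i * x i := by
        rw [Finset.mul_sum]
        exact Finset.sum_congr rfl fun i _ => by ring
      rw [e]
      ring
    have h5 : 0 ≤ x ⬝ᵥ x := by simpa using dotProduct_star_self_nonneg x
    nlinarith [mul_le_mul_of_nonneg_right hηn h5]
  · simp only [Set.ofPred_forall]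
    refine isOpen_iInter_of_finite fun i => isOpen_iInter_of_finite fun j => ?_
    refine isOpen_lt ?_ continuous_const
    fun_prop

lemma aux_surj {n m : ℕ} (A : Fin m → Matrix (Fin n) (Fin n) ℝ) (hLI : LinearIndependent ℝ A)
    (L : Matrix (Fin n) (Fin n) ℝ →ₗ[ℝ] (Fin m → ℝ)) (hL : ∀ X i, L X i = (A i * X).trace) :
    Function.Surjective L := by
  rw [← LinearMap.range_eq_top]
  by_contra hne
  obtain ⟨f, hf0, hf⟩ := Submodule.exists_le_ker_of_lt_top _ (lt_top_iff_ne_top.2 hne)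
  apply hf0
  set y : Fin m → ℝ := fun i => f (Pi.single i 1) with hy
  have hfe : ∀ z, f z = ∑ i, z i * y i := by
    intro z
    conv_lhs => rw [pi_eq_sum_univ' z]
    simp [map_sum, hy]
  have h0 : ∑ i, y i • A i = 0 := by
    rw [Matrix.ext_iff_trace_mul_right]
    intro X
    have h1 : f (L X) = 0 := hf ⟨X, rfl⟩
    rw [hfe] at h1
    rw [Matrix.sum_mul, Matrix.trace_sum, zero_mul, Matrix.trace_zero, ← h1]
    refine Finset.sum_congr rfl fun i _ => ?_
    rw [hL, Matrix.smul_mul, Matrix.trace_smul, smul_eq_mul, mul_comm]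
  have hy0 := Fintype.linearIndependent_iff.1 hLI y h0
  ext z
  simp [hfe, hy0]

lemma aux_symm_trace {n : ℕ} {S X : Matrix (Fin n) (Fin n) ℝ} (hS : S.IsSymm) :
    (S * Xᵀ).trace = (S * X).trace := by
  rw [← Matrix.trace_transpose, Matrix.transpose_mul, Matrix.transpose_transpose, hS.eq,
    Matrix.trace_mul_comm]

lemma aux_dual {n m : ℕ} (A : Fin m → Matrix (Fin n) (Fin n) ℝ) (b : Fin m → ℝ)
    (C : Matrix (Fin n) (Fin n) ℝ) (hC : C.IsSymm) (hA : ∀ i, (A i).IsSymm)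
    (hLI : LinearIndependent ℝ A) (X0 : Matrix (Fin n) (Fin n) ℝ) (hX0 : PrimalFeasible A b X0)
    (hX0' : X0.PosDef) (w : ℝ) (hw : ∀ X, PrimalFeasible A b X → w ≤ (C * X).trace) :
    ∃ (y : Fin m → ℝ) (S : Matrix (Fin n) (Fin n) ℝ), S.IsSymm ∧ (∑ i, y i • A i) + S = C ∧ S.PosSemidef ∧ w ≤ ∑ i, b i * y i := by
  let L : Matrix (Fin n) (Fin n) ℝ →ₗ[ℝ] (Fin m → ℝ) :=
    { toFun := fun X i => (A i * X).trace
      map_add' := fun X Y => by ext i; simp [Matrix.mul_add]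
      map_smul' := fun c X => by ext i; simp }
  have hLs := aux_surj A hLI L (fun _ _ => rfl)
  let Φ : Matrix (Fin n) (Fin n) ℝ × ℝ →ₗ[ℝ] (Fin m → ℝ) × ℝ :=
    { toFun := fun p => (L p.1, (C * p.1).trace + p.2)
      map_add' := fun X Y => by
        ext i
        · simp
        · simp [Matrix.mul_add]; ring
      map_smul' := fun c X => by
        ext i
        · simp
        · simp [mul_add] }
  have hΦ : Function.Surjective Φ := by
    rintro ⟨z, s⟩
    obtain ⟨X, rfl⟩ := hLs z
    exact ⟨(X, s - (C * X).trace), by simp [Φ]⟩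
  let Ω : Set (Matrix (Fin n) (Fin n) ℝ) := {X | ∀ x, 0 ≤ x ⬝ᵥ (X *ᵥ x)}
  have hΩc : Convex ℝ Ω := by
    intro X hX Y hY a c ha hc _ x
    have h1 := hX x
    have h2 := hY x
    simp only [Matrix.add_mulVec, Matrix.smul_mulVec, dotProduct_add, dotProduct_smul,
      smul_eq_mul]
    positivity
  let G : Set ((Fin m → ℝ) × ℝ) := Φ '' (interior Ω ×ˢ Set.Ioi (0 : ℝ))
  have hGc : Convex ℝ G := (hΩc.interior.prod (convex_Ioi 0)).linear_image Φ
  have hGo : IsOpen G := Φ.isOpenMap_of_finiteDimensional hΦ _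
    (isOpen_interior.prod isOpen_Ioi)
  have hnot : (b, w) ∉ G := by
    rintro ⟨⟨X, r⟩, ⟨hX, hr⟩, he⟩
    simp only [Φ, LinearMap.coe_mk, AddHom.coe_mk, Prod.mk.injEq] at he
    obtain ⟨he1, he2⟩ := he
    have hXΩ : X ∈ Ω := interior_subset hX
    have hr' : 0 < r := hr
    have htr : ∀ S : Matrix (Fin n) (Fin n) ℝ, S.IsSymm →
        (S * ((1 / 2 : ℝ) • (X + Xᵀ))).trace = (S * X).trace := by
      intro S hS
      rw [Matrix.mul_smul, Matrix.trace_smul, Matrix.mul_add, Matrix.trace_add,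
        aux_symm_trace hS, smul_eq_mul]
      ring
    have hsym : ((1 / 2 : ℝ) • (X + Xᵀ)).IsSymm := by
      simp [Matrix.IsSymm, Matrix.transpose_smul, add_comm]
    have hf : PrimalFeasible A b ((1 / 2 : ℝ) • (X + Xᵀ)) := by
      refine ⟨hsym, fun i => ?_, aux_psd_iff.2 ⟨hsym, fun x => ?_⟩⟩
      · rw [htr _ (hA i)]
        exact congrFun he1 i
      · have h1 := hXΩ x
        have h2 : x ⬝ᵥ (Xᵀ *ᵥ x) = x ⬝ᵥ (X *ᵥ x) := by
          rw [Matrix.mulVec_transpose, dotProduct_comm, Matrix.dotProduct_mulVec]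
        rw [Matrix.smul_mulVec, Matrix.add_mulVec, dotProduct_smul, dotProduct_add, h2,
          smul_eq_mul]
        linarith
    have := hw _ hf
    rw [htr _ hC] at this
    linarith
  obtain ⟨f, hf⟩ := geometric_hahn_banach_open_point hGc hGo hnot
  set y : Fin m → ℝ := fun i => f (Pi.single i 1, 0) with hy
  set c : ℝ := f (0, 1) with hc
  have hfe : ∀ z s, f (z, s) = ∑ i, z i * y i + c * s := by
    intro z s
    have e : (z, s) = ∑ i, z i • ((Pi.single i 1, 0) : (Fin m → ℝ) × ℝ) + s • (0, 1) := by
      ext i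
      · simp [Finset.sum_apply, Pi.single_apply, Prod.fst_sum]
      · simp [Prod.snd_sum]
    rw [e, map_add, map_sum, map_smul, smul_eq_mul, mul_comm s]
    congr 1
    exact Finset.sum_congr rfl fun i _ => by rw [map_smul, smul_eq_mul]
  have key : ∀ X : Matrix (Fin n) (Fin n) ℝ, X.PosDef → ∀ r : ℝ, 0 < r →
      ∑ i, (A i * X).trace * y i + c * ((C * X).trace + r) < ∑ i, b i * y i + c * w := by
    intro X hX r hr
    have := hf (Φ (X, r)) ⟨(X, r), ⟨aux_interior hX, hr⟩, rfl⟩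
    have e : Φ (X, r) = (fun i => (A i * X).trace, (C * X).trace + r) := rfl
    rwa [e, hfe, hfe] at this
  -- sign of c
  have hcneg : c < 0 := by
    by_contra hcn
    have hcn' : 0 ≤ c := not_lt.1 hcn
    have h1 := key X0 hX0' 1 one_pos
    simp only [hX0.2.1] at h1
    have h2 := hw X0 hX0
    nlinarith
  have hscale : ∀ X : Matrix (Fin n) (Fin n) ℝ, X.PosDef → ∀ t r : ℝ, 0 < t → 0 < r →
      t * (∑ i, (A i * X).trace * y i + c * (C * X).trace) + c * r
        < ∑ i, b i * y i + c * w := by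
    intro X hX t r ht hr
    have h1 := key (t • X) (hX.smul ht) r hr
    have e : ∑ i, (A i * (t • X)).trace * y i = t * ∑ i, (A i * X).trace * y i := by
      rw [Finset.mul_sum]
      refine Finset.sum_congr rfl fun i _ => ?_
      rw [Matrix.mul_smul, Matrix.trace_smul, smul_eq_mul]; ring
    rw [e, Matrix.mul_smul, Matrix.trace_smul, smul_eq_mul] at h1
    linarith
  have hle : ∀ X : Matrix (Fin n) (Fin n) ℝ, X.PosDef →
      ∑ i, (A i * X).trace * y i + c * (C * X).trace ≤ 0 := by
    intro X hX
    by_contra hpos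
    push Not at hpos
    set P := ∑ i, (A i * X).trace * y i + c * (C * X).trace with hP
    set K := ∑ i, b i * y i + c * w with hK
    have h1 := hscale X hX ((|K| - c) / P) 1 (by
      apply div_pos _ hpos
      have := abs_nonneg K
      linarith) one_pos
    rw [← hP, div_mul_cancel₀ _ hpos.ne'] at h1
    have := le_abs_self K
    linarith
  have hK : 0 ≤ ∑ i, b i * y i + c * w := by
    by_contra hneg
    push Not at hneg
    set K := ∑ i, b i * y i + c * w with hKd
    set P := ∑ i, (A i * X0).trace * y i + c * (C * X0).trace with hP
    have hP0 : P ≤ 0 := hle X0 hX0'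
    have h1 := hscale X0 hX0' ((-K / 2) / (1 - P)) ((-K / 2) / (-c))
      (div_pos (by linarith) (by linarith)) (div_pos (by linarith) (by linarith))
    rw [← hP] at h1
    have h2 : c * (-K / 2 / (-c)) = K / 2 := by
      have := hcneg.ne
      rw [div_neg, mul_neg, mul_div_cancel₀ _ this]
      ring
    have h3 : (-K / 2) / (1 - P) * P ≥ K / 2 := by
      rw [div_mul_eq_mul_div, ge_iff_le, le_div_iff₀ (by linarith)]
      nlinarith
    rw [h2] at h1
    linarith
  let S : Matrix (Fin n) (Fin n) ℝ := C - ∑ i, (y i / (-c)) • A i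
  have hSsym : S.IsSymm := by
    simp only [S, Matrix.IsSymm, Matrix.transpose_sub, Matrix.transpose_sum,
      Matrix.transpose_smul, hC.eq, (hA _).eq]
  have hStr : ∀ X, (S * X).trace
      = (∑ i, (A i * X).trace * y i + c * (C * X).trace) / c := by
    intro X
    simp only [S, Matrix.sub_mul, Matrix.trace_sub, Matrix.sum_mul, Matrix.trace_sum,
      Matrix.smul_mul, Matrix.trace_smul, smul_eq_mul]
    rw [add_div, mul_div_cancel_left₀ _ hcneg.ne, Finset.sum_div, sub_eq_add_neg,
      ← Finset.sum_neg_distrib, add_comm]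
    congr 1
    refine Finset.sum_congr rfl fun i _ => ?_
    rw [div_neg]; ring
  have hSpos : ∀ X : Matrix (Fin n) (Fin n) ℝ, X.PosDef → 0 ≤ (S * X).trace := by
    intro X hX
    rw [hStr]
    exact div_nonneg_of_nonpos (hle X hX) hcneg.le
  refine ⟨fun i => y i / (-c), S, hSsym, by simp [S], aux_psd_iff.2 ⟨hSsym, fun x => ?_⟩, ?_⟩
  · by_contra hneg
    push Not at hneg
    have hq : (S * vecMulVec x x).trace = x ⬝ᵥ (S *ᵥ x) := by
      rw [Matrix.mul_vecMulVec, Matrix.trace_vecMulVec, dotProduct_comm]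
    set q := x ⬝ᵥ (S *ᵥ x) with hqd
    set p := (S * X0).trace with hp
    have hp0 : 0 ≤ p := hSpos X0 hX0'
    set t := (-q / 2) / (p + 1) with ht
    have ht0 : 0 < t := div_pos (by linarith) (by linarith)
    have hv : (vecMulVec x x).PosSemidef := by
      simpa using Matrix.posSemidef_vecMulVec_self_star x
    have h1 := hSpos (t • X0 + vecMulVec x x) ((hX0'.smul ht0).add_posSemidef hv)
    rw [Matrix.mul_add, Matrix.trace_add, Matrix.mul_smul, Matrix.trace_smul, hq, ← hp,
      smul_eq_mul] at h1
    have h2 : t * p ≤ -q / 2 := by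
      rw [ht, div_mul_eq_mul_div, div_le_iff₀ (by linarith)]
      nlinarith
    linarith
  · have e : ∑ i, b i * (y i / (-c)) = (∑ i, b i * y i) / (-c) := by
      rw [Finset.sum_div]
      exact Finset.sum_congr rfl fun i _ => by ring
    rw [e, le_div_iff₀ (by linarith)]
    linarith

section sdp

variable {n m : ℕ} {C Cbar : Matrix (Fin n) (Fin n) ℝ} {A : Fin m → Matrix (Fin n) (Fin n) ℝ}
  {b : Fin m → ℝ}

lemma aux_gap {ε : ℝ} {X S : Matrix (Fin n) (Fin n) ℝ} {y : Fin m → ℝ}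
    (hX : PrimalFeasible A b X) (hS : DualFeasible C Cbar A ε y S) :
    ((C + ε • Cbar) * X).trace = ∑ i, b i * y i + (S * X).trace := by
  rw [← hS.2.1, Matrix.add_mul, Matrix.trace_add, Matrix.sum_mul, Matrix.trace_sum]
  congr 1
  refine Finset.sum_congr rfl fun i _ => ?_
  rw [Matrix.smul_mul, Matrix.trace_smul, hX.2.1, smul_eq_mul, mul_comm]

lemma aux_opt_of_comp {ε : ℝ} {X S : Matrix (Fin n) (Fin n) ℝ} {y : Fin m → ℝ}
    (hX : PrimalFeasible A b X) (hS : DualFeasible C Cbar A ε y S) (h : (S * X).trace = 0) :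
    X ∈ PrimalOpt C Cbar A b ε ∧ (y, S) ∈ DualOpt C Cbar A b ε := by
  have h0 := aux_gap hX hS
  refine ⟨⟨hX, fun X' hX' => ?_⟩, ⟨hS, fun y' S' hS' => ?_⟩⟩
  · have h1 := aux_gap hX' hS
    have h2 := aux_trace_nonneg hS.2.2 hX'.2.2
    linarith
  · have h1 := aux_gap hX hS'
    have h2 := aux_trace_nonneg hS'.2.2 hX.2.2
    change _ ≤ ∑ i, b i * y i
    linarith

lemma aux_E_of_dual {ε : ℝ} {S : Matrix (Fin n) (Fin n) ℝ} {y : Fin m → ℝ}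
    (hS : DualFeasible C Cbar A ε y S) : ε ∈ Eset C Cbar A b := by
  change ⊥ < vfun C Cbar A b ε
  refine lt_of_lt_of_le (EReal.bot_lt_coe (∑ i, b i * y i)) ?_
  apply le_sInf
  rintro _ ⟨X, hX, rfl⟩
  have h1 := aux_gap hX hS
  have h2 := aux_trace_nonneg hS.2.2 hX.2.2
  change ((∑ i, b i * y i : ℝ) : EReal) ≤ (((C + ε • Cbar) * X).trace : EReal)
  rw [EReal.coe_le_coe_iff]
  linarith

lemma aux_dual_of_E (hSA : StandingAssumptions C Cbar A b) {ε : ℝ} (hε : ε ∈ Eset C Cbar A b) :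
    ∃ y S, DualFeasible C Cbar A ε y S := by
  obtain ⟨hC, hCb, hA, hLI, X0, y0, S0, hX0, hX0', -, -⟩ := hSA
  have hε' : ⊥ < vfun C Cbar A b ε := hε
  obtain ⟨w, -, hw⟩ := EReal.lt_iff_exists_real_btwn.1 hε'
  obtain ⟨y, S, h1, h2, h3, -⟩ := aux_dual A b (C + ε • Cbar) (hC.add (hCb.smul ε)) hA hLI X0 hX0
    hX0' w (fun X hX => by
      have h := hw.le.trans (sInf_le ⟨X, hX, rfl⟩)
      exact EReal.coe_le_coe_iff.1 h)
  exact ⟨y, S, h1, h2, h3⟩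

lemma aux_dual_comb {ε₁ ε₂ : ℝ} {S₁ S₂ : Matrix (Fin n) (Fin n) ℝ} {y₁ y₂ : Fin m → ℝ}
    (h₁ : (∑ i, y₁ i • A i) + S₁ = C + ε₁ • Cbar) (h₂ : (∑ i, y₂ i • A i) + S₂ = C + ε₂ • Cbar)
    {a c : ℝ} (hac : a + c = 1) :
    (∑ i, (a • y₁ + c • y₂) i • A i) + (a • S₁ + c • S₂) = C + (a * ε₁ + c * ε₂) • Cbar := by
  have e : ∑ i, (a • y₁ + c • y₂) i • A i = a • (∑ i, y₁ i • A i) + c • (∑ i, y₂ i • A i) := by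
    simp only [Finset.smul_sum, ← Finset.sum_add_distrib, Pi.add_apply, Pi.smul_apply,
      smul_eq_mul, add_smul, mul_smul]
  rw [e, eq_sub_of_add_eq h₁, eq_sub_of_add_eq h₂]
  have : C = (a + c) • C := by rw [hac, one_smul]
  rw [add_smul] at this
  conv_rhs => rw [this]
  module

lemma aux_slater (hSA : StandingAssumptions C Cbar A b) {ε : ℝ}
    (hε : ε ∈ interior (Eset C Cbar A b)) :
    ∃ y S, DualFeasible C Cbar A ε y S ∧ S.PosDef := by
  have hSA' := hSA
  obtain ⟨hC, hCb, hA, hLI, X0, y0, S0, hX0, hX0', hS0, hS0'⟩ := hSA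
  have hcont : Continuous (fun t : ℝ => (1 + t) * ε) := by fun_prop
  have hev : ∀ᶠ t in 𝓝 (0 : ℝ), (1 + t) * ε ∈ interior (Eset C Cbar A b) := by
    apply hcont.continuousAt.eventually_mem
    simpa using isOpen_interior.mem_nhds hε
  obtain ⟨η, hη, h⟩ := Metric.eventually_nhds_iff.1 hev
  have h1 := interior_subset (h (y := η / 2) (by
    rw [Real.dist_eq, sub_zero, abs_of_pos (by linarith)]; linarith))
  set t := η / 2 with ht
  have ht0 : 0 < t := by positivity
  obtain ⟨y, S, hS⟩ := aux_dual_of_E hSA' h1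
  have hc0 : 0 < t / (1 + t) := by positivity
  have hc1 : 0 ≤ 1 / (1 + t) := by positivity
  have hpd : ((t / (1 + t)) • S0 + (1 / (1 + t)) • S).PosDef :=
    (hS0'.smul hc0).add_posSemidef (hS.2.2.smul hc1)
  refine ⟨(t / (1 + t)) • y0 + (1 / (1 + t)) • y, _,
    ⟨(hS0.1.smul _).add (hS.1.smul _), ?_, hpd.posSemidef⟩, hpd⟩
  · rw [aux_dual_comb hS0.2.1 hS.2.1 (by field_simp; ring)]
    congr 2
    field_simp
    ring

lemma aux_entry {X : Matrix (Fin n) (Fin n) ℝ} (hX : X.PosSemidef) (i j : Fin n) :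
    |X i j| ≤ X.trace := by
  have hd : ∀ i, X i i ≤ X.trace := fun i =>
    Finset.single_le_sum (f := fun i => X i i) (fun k _ => hX.diag_nonneg) (Finset.mem_univ i)
  obtain ⟨hs, hq⟩ := aux_psd_iff.1 hX
  have hsym : X j i = X i j := hs.apply i j
  have h1 := hq (Pi.single i 1 + Pi.single j 1)
  have h2 := hq (Pi.single i 1 - Pi.single j 1)
  simp only [Matrix.mulVec_add, Matrix.mulVec_sub, dotProduct_add, add_dotProduct, dotProduct_sub,
    sub_dotProduct, Matrix.mulVec_single_one, single_one_dotProduct, Matrix.col_apply] at h1 h2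
  have := hd i
  have := hd j
  rw [abs_le]
  constructor <;> linarith

lemma aux_primal_att (hSA : StandingAssumptions C Cbar A b) {ε : ℝ}
    (hε : ε ∈ interior (Eset C Cbar A b)) : (PrimalOpt C Cbar A b ε).Nonempty := by
  obtain ⟨y, S, hS, hSpd⟩ := aux_slater hSA hε
  obtain ⟨hC, hCb, hA, hLI, X0, y0, S0, hX0, hX0', hS0, hS0'⟩ := hSA
  obtain ⟨δ, hδ, hδS⟩ := aux_posDef_dom hSpd
  set D := C + ε • Cbar with hD
  let K : Set (Matrix (Fin n) (Fin n) ℝ) :=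
    {X | PrimalFeasible A b X ∧ (D * X).trace ≤ (D * X0).trace}
  have hcl : IsClosed K := by
    have hcont : ∀ B : Matrix (Fin n) (Fin n) ℝ, Continuous
        (fun X : Matrix (Fin n) (Fin n) ℝ => (B * X).trace) := fun B => by
      exact (continuous_const.matrix_mul continuous_id).matrix_trace
    have e : K = {X | X.IsSymm} ∩ (⋂ i, {X | (A i * X).trace = b i}) ∩
        (⋂ x : Fin n → ℝ, {X | 0 ≤ x ⬝ᵥ (X *ᵥ x)}) ∩ {X | (D * X).trace ≤ (D * X0).trace} := by
      ext X
      simp only [K, PrimalFeasible, aux_psd_iff, Set.mem_inter_iff, Set.mem_iInter,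
        Set.mem_ofPred_eq]
      tauto
    rw [e]
    refine IsClosed.inter (IsClosed.inter (IsClosed.inter ?_ ?_) ?_) ?_
    · exact isClosed_eq (continuous_id.matrix_transpose) continuous_id
    · exact isClosed_iInter fun i => isClosed_eq (hcont _) continuous_const
    · refine isClosed_iInter fun x => isClosed_le continuous_const ?_
      exact continuous_const.dotProduct (continuous_id.matrix_mulVec continuous_const)
    · exact isClosed_le (hcont _) continuous_const
  set M := ((D * X0).trace - ∑ i, b i * y i) / δ with hM
  have hsub : K ⊆ Set.pi Set.univ (fun _ => Set.pi Set.univ (fun _ => Set.Icc (-M) M)) := by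
    rintro X ⟨hX, hXv⟩ i _ j _
    have h1 := aux_entry hX.2.2 i j
    have h2 := aux_trace_nonneg hδS hX.2.2
    rw [Matrix.sub_mul, Matrix.trace_sub, Matrix.smul_mul, Matrix.trace_smul, Matrix.one_mul,
      smul_eq_mul] at h2
    have h3 := aux_gap hX hS
    have h4 : X.trace ≤ M := by
      rw [hM, le_div_iff₀ hδ]
      linarith
    exact abs_le.1 (h1.trans h4)
  have hK : IsCompact K := by
    refine IsCompact.of_isClosed_subset ?_ hcl hsub
    exact isCompact_univ_pi fun _ => isCompact_univ_pi fun _ => isCompact_Icc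
  obtain ⟨X, hX, hmin⟩ := hK.exists_isMinOn ⟨X0, hX0, le_rfl⟩
    (f := fun X => (D * X).trace)
    ((continuous_const.matrix_mul continuous_id).matrix_trace).continuousOn
  refine ⟨X, hX.1, fun X' hX' => ?_⟩
  by_cases h : (D * X').trace ≤ (D * X0).trace
  · exact hmin (show X' ∈ K from ⟨hX', h⟩)
  · exact hX.2.trans (not_le.1 h).le

lemma aux_pair (hSA : StandingAssumptions C Cbar A b) {ε : ℝ}
    (hε : ε ∈ interior (Eset C Cbar A b)) :
    ∃ X y S, PrimalFeasible A b X ∧ DualFeasible C Cbar A ε y S ∧ (S * X).trace = 0 := by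
  obtain ⟨X, hX, hmin⟩ := aux_primal_att hSA hε
  obtain ⟨hC, hCb, hA, hLI, X0, y0, S0, hX0, hX0', -, -⟩ := hSA
  obtain ⟨y, S, h1, h2, h3, h4⟩ := aux_dual A b (C + ε • Cbar) (hC.add (hCb.smul ε)) hA hLI X0 hX0
    hX0' _ hmin
  have hS : DualFeasible C Cbar A ε y S := ⟨h1, h2, h3⟩
  refine ⟨X, y, S, hX, hS, ?_⟩
  have := aux_gap hX hS
  have := aux_trace_nonneg h3 hX.2.2
  linarith

lemma aux_comp (hSA : StandingAssumptions C Cbar A b) {ε : ℝ}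
    (hε : ε ∈ interior (Eset C Cbar A b)) {X S : Matrix (Fin n) (Fin n) ℝ} {y : Fin m → ℝ}
    (hX : X ∈ PrimalOpt C Cbar A b ε) (hS : (y, S) ∈ DualOpt C Cbar A b ε) : S * X = 0 := by
  obtain ⟨X', y', S', hX', hS', h0⟩ := aux_pair hSA hε
  apply aux_trace_zero hS.1.2.2 hX.1.2.2
  have h1 := aux_gap hX.1 hS.1
  have h2 := aux_gap hX' hS'
  have h3 := hX.2 X' hX'
  have h4 : ∑ i, b i * y' i ≤ ∑ i, b i * y i := hS.2 y' S' hS'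
  have h5 := aux_trace_nonneg hS.1.2.2 hX.1.2.2
  change _ = ∑ i, b i * y i + (S * X).trace at h1
  change 0 ≤ (S * X).trace at h5
  linarith

lemma aux_convex_P (ε : ℝ) : Convex ℝ (PrimalOpt C Cbar A b ε) := by
  rintro X ⟨hX, hX'⟩ Y ⟨hY, hY'⟩ a c ha hc hac
  refine ⟨⟨(hX.1.smul _).add (hY.1.smul _), fun i => ?_, (hX.2.2.smul ha).add (hY.2.2.smul hc)⟩,
    fun Z hZ => ?_⟩
  · rw [Matrix.mul_add, Matrix.trace_add, Matrix.mul_smul, Matrix.mul_smul, Matrix.trace_smul,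
      Matrix.trace_smul, hX.2.1, hY.2.1, ← add_smul, hac, one_smul]
  · rw [Matrix.mul_add, Matrix.trace_add, Matrix.mul_smul, Matrix.mul_smul, Matrix.trace_smul,
      Matrix.trace_smul, smul_eq_mul, smul_eq_mul]
    have h1 := mul_le_mul_of_nonneg_left (hX' Z hZ) ha
    have h2 := mul_le_mul_of_nonneg_left (hY' Z hZ) hc
    have h3 : ((C + ε • Cbar) * Z).trace
      = a * ((C + ε • Cbar) * Z).trace + c * ((C + ε • Cbar) * Z).trace := by
      rw [← add_mul, hac, one_mul]
    linarith

lemma aux_convex_D (ε : ℝ) : Convex ℝ (DualOpt C Cbar A b ε) := by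
  rintro ⟨y, S⟩ ⟨hX, hX'⟩ ⟨z, T⟩ ⟨hY, hY'⟩ a c ha hc hac
  refine ⟨⟨(hX.1.smul _).add (hY.1.smul _), ?_, (hX.2.2.smul ha).add (hY.2.2.smul hc)⟩,
    fun y' S' hZ => ?_⟩
  · have := aux_dual_comb hX.2.1 hY.2.1 hac
    rw [← add_mul, hac, one_mul] at this
    exact this
  · have h1 := mul_le_mul_of_nonneg_left (hX' y' S' hZ) ha
    have h2 := mul_le_mul_of_nonneg_left (hY' y' S' hZ) hc
    have h3 : ∑ i, b i * y' i = a * ∑ i, b i * y' i + c * ∑ i, b i * y' i := by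
      rw [← add_mul, hac, one_mul]
    have h4 : ∑ i, b i * (a • (y, S) + c • (z, T)).1 i
        = a * ∑ i, b i * y i + c * ∑ i, b i * z i := by
      rw [Finset.mul_sum, Finset.mul_sum, ← Finset.sum_add_distrib]
      refine Finset.sum_congr rfl fun i _ => ?_
      simp
      ring
    rw [h4, h3]
    exact add_le_add h1 h2

section norms
attribute [local instance] Matrix.normedAddCommGroup Matrix.normedSpace

lemma aux_maxcomp (hSA : StandingAssumptions C Cbar A b) {ε : ℝ}
    (hε : ε ∈ interior (Eset C Cbar A b)) : ∃ X y S, MaxComp C Cbar A b ε X y S := by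
  obtain ⟨X', y', S', hX', hS', h0⟩ := aux_pair hSA hε
  obtain ⟨h1, h2⟩ := aux_opt_of_comp hX' hS' h0
  obtain ⟨X, hX⟩ := Set.Nonempty.intrinsicInterior (aux_convex_P ε) ⟨_, h1⟩
  obtain ⟨⟨y, S⟩, hS⟩ := Set.Nonempty.intrinsicInterior (aux_convex_D ε) ⟨_, h2⟩
  exact ⟨X, y, S, hX, hS⟩

end norms

lemma aux_max_P {ε : ℝ} {X X' : Matrix (Fin n) (Fin n) ℝ}
    (hX : X ∈ intrinsicInterior ℝ (PrimalOpt C Cbar A b ε)) (hX' : X' ∈ PrimalOpt C Cbar A b ε)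
    (v : Fin n → ℝ) (hv : X *ᵥ v = 0) : X' *ᵥ v = 0 := by
  obtain ⟨δ, hδ, h⟩ := aux_ri_ext hX hX'
  apply aux_zero hX'.1.2.2
  have h1 := (aux_psd_iff.1 h.1.2.2).2 v
  rw [Matrix.add_mulVec, Matrix.smul_mulVec, Matrix.sub_mulVec, hv, zero_sub, zero_add,
    dotProduct_smul, dotProduct_neg, smul_eq_mul] at h1
  nlinarith

lemma aux_max_D {ε : ℝ} {S S' : Matrix (Fin n) (Fin n) ℝ} {y y' : Fin m → ℝ}
    (hX : (y, S) ∈ intrinsicInterior ℝ (DualOpt C Cbar A b ε))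
    (hX' : (y', S') ∈ DualOpt C Cbar A b ε)
    (v : Fin n → ℝ) (hv : S *ᵥ v = 0) : S' *ᵥ v = 0 := by
  obtain ⟨δ, hδ, h⟩ := aux_ri_ext hX hX'
  apply aux_zero hX'.1.2.2
  have h1 : 0 ≤ v ⬝ᵥ ((S + δ • (S - S')) *ᵥ v) := (aux_psd_iff.1 h.1.2.2).2 v
  rw [Matrix.add_mulVec, Matrix.smul_mulVec, Matrix.sub_mulVec, hv, zero_sub, zero_add,
    dotProduct_smul, dotProduct_neg, smul_eq_mul] at h1
  change v ⬝ᵥ (S' *ᵥ v) ≤ 0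
  nlinarith

lemma aux_symm_of_P {ε : ℝ} {X : Matrix (Fin n) (Fin n) ℝ}
    (hX : X ∈ intrinsicInterior ℝ (PrimalOpt C Cbar A b ε)) : X.IsSymm :=
  (intrinsicInterior_subset hX).1.1

lemma aux_symm_of_D {ε : ℝ} {S : Matrix (Fin n) (Fin n) ℝ} {y : Fin m → ℝ}
    (hX : (y, S) ∈ intrinsicInterior ℝ (DualOpt C Cbar A b ε)) : S.IsSymm :=
  (intrinsicInterior_subset hX).1.1

lemma aux_psd_add_ker {S T : Matrix (Fin n) (Fin n) ℝ} (hS : S.PosSemidef) (hT : T.PosSemidef)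
    {v : Fin n → ℝ} (h : (S + T) *ᵥ v = 0) : S *ᵥ v = 0 := by
  apply aux_zero hS
  have h1 := (aux_psd_iff.1 hT).2 v
  have h2 : v ⬝ᵥ ((S + T) *ᵥ v) = 0 := by rw [h, dotProduct_zero]
  rw [Matrix.add_mulVec, dotProduct_add] at h2
  linarith

lemma aux_mul_zero {S T X : Matrix (Fin n) (Fin n) ℝ} (h : ∀ v, S *ᵥ v = 0 → T *ᵥ v = 0)
    (hSX : S * X = 0) : T * X = 0 := by
  obtain ⟨G, rfl⟩ := aux_ker_factor h
  rw [Matrix.mul_assoc, hSX, Matrix.mul_zero]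

lemma aux_core (hSA : StandingAssumptions C Cbar A b) {ε₁ ε₂ : ℝ} (hlt : ε₁ < ε₂)
    (hε₁ : ε₁ ∈ interior (Eset C Cbar A b))
    {X₁ S₁ S₂ : Matrix (Fin n) (Fin n) ℝ} {y₁ y₂ : Fin m → ℝ}
    (hm₁ : MaxComp C Cbar A b ε₁ X₁ y₁ S₁)
    (hm₂ : (y₂, S₂) ∈ DualOpt C Cbar A b ε₂)
    (hS12 : ∀ v, S₁ *ᵥ v = 0 → S₂ *ᵥ v = 0) (hS21 : ∀ v, S₂ *ᵥ v = 0 → S₁ *ᵥ v = 0) :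
    ∃ d : ℝ, 0 < d ∧ ∀ ε ∈ Set.Ioo (ε₁ - d) (ε₂ + d), ε ∈ interior (Eset C Cbar A b) ∧
      ∃ X y S, MaxComp C Cbar A b ε X y S ∧
        LinearMap.range X.mulVecLin = LinearMap.range X₁.mulVecLin ∧
        LinearMap.range S.mulVecLin = LinearMap.range S₁.mulVecLin := by
  have hX₁ := intrinsicInterior_subset hm₁.1
  have hD₁ := intrinsicInterior_subset hm₁.2
  have hF₁ : DualFeasible C Cbar A ε₁ y₁ S₁ := hD₁.1
  have hF₂ : DualFeasible C Cbar A ε₂ y₂ S₂ := hm₂.1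
  have hp₁ := hF₁.2.2
  have hp₂ := hF₂.2.2
  have hSX₁ : S₁ * X₁ = 0 := aux_comp hSA hε₁ hX₁ hD₁
  have hSX₂ : S₂ * X₁ = 0 := aux_mul_zero hS12 hSX₁
  obtain ⟨δ₁, hδ₁, hd₁⟩ := aux_dominate hp₁ hp₂ hS12
  obtain ⟨δ₂, hδ₂, hd₂⟩ := aux_dominate hp₂ hp₁ hS21
  set δ : ℝ := min (1 / 2) (min δ₁ δ₂) with hδd
  have hδ0 : 0 < δ := lt_min (by norm_num) (lt_min hδ₁ hδ₂)
  have hδh : δ ≤ 1 / 2 := min_le_left _ _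
  have hA1 : (S₁ - δ • S₂).PosSemidef :=
    hd₁ δ ((min_le_right _ _).trans (min_le_left _ _))
  have hA2 : (S₂ - δ • S₁).PosSemidef :=
    hd₂ δ ((min_le_right _ _).trans (min_le_right _ _))
  set e : ℝ := ε₂ - ε₁ with he
  have he0 : 0 < e := by linarith
  -- the affine family
  have hfam : ∀ t ∈ Set.Ioo (-δ) (1 + δ), ∃ c : ℝ, 0 < c ∧
      (((1 - t) • S₁ + t • S₂) - c • S₁).PosSemidef := by
    rintro t ⟨ht1, ht2⟩
    rcases le_or_gt 0 t with h | h
    · refine ⟨1 - t + t * δ, by nlinarith, ?_⟩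
      have := hA2.smul h
      convert this using 1
      module
    · refine ⟨1 - t + t / δ, ?_, ?_⟩
      · have : -1 < t / δ := by
          rw [lt_div_iff₀ hδ0]; linarith
        linarith
      · have := hA1.smul (a := -t / δ) (by apply div_nonneg <;> linarith)
        convert this using 1
        rw [smul_sub, smul_smul, div_mul_cancel₀ _ hδ0.ne', neg_div]
        module
  have hDF : ∀ t ∈ Set.Ioo (-δ) (1 + δ), DualFeasible C Cbar A ((1 - t) * ε₁ + t * ε₂)
      ((1 - t) • y₁ + t • y₂) ((1 - t) • S₁ + t • S₂) := by
    intro t ht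
    obtain ⟨c, hc, hcp⟩ := hfam t ht
    refine ⟨(hF₁.1.smul _).add (hF₂.1.smul _), aux_dual_comb hF₁.2.1 hF₂.2.1 (by ring), ?_⟩
    have := hcp.add (hp₁.smul hc.le)
    simpa using this
  have hker : ∀ t ∈ Set.Ioo (-δ) (1 + δ), ∀ v, ((1 - t) • S₁ + t • S₂) *ᵥ v = 0 →
      S₁ *ᵥ v = 0 := by
    intro t ht v hv
    obtain ⟨c, hc, hcp⟩ := hfam t ht
    have h1 : (c • S₁ + (((1 - t) • S₁ + t • S₂) - c • S₁)) *ᵥ v = 0 := by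
      rw [add_sub_cancel, hv]
    have h2 := aux_psd_add_ker (hp₁.smul hc.le) hcp h1
    rw [Matrix.smul_mulVec] at h2
    exact (smul_eq_zero.1 h2).resolve_left hc.ne'
  have hsub : Set.Ioo (ε₁ - δ * e) (ε₂ + δ * e) ⊆ interior (Eset C Cbar A b) := by
    apply interior_maximal _ isOpen_Ioo
    rintro ε ⟨h1, h2⟩
    have ht : (ε - ε₁) / e ∈ Set.Ioo (-δ) (1 + δ) := by
      constructor
      · rw [lt_div_iff₀ he0]; linarith
      · rw [div_lt_iff₀ he0]; linarith
    have := aux_E_of_dual (b := b) (hDF _ ht)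
    convert this using 1
    field_simp
    rw [he]; ring
  refine ⟨δ * e, by positivity, fun ε hε => ⟨hsub hε, ?_⟩⟩
  have hεE := hsub hε
  obtain ⟨h1, h2⟩ := hε
  set t : ℝ := (ε - ε₁) / e with htd
  have ht : t ∈ Set.Ioo (-δ) (1 + δ) := by
    constructor
    · rw [lt_div_iff₀ he0]; linarith
    · rw [div_lt_iff₀ he0]; linarith
  have hte : (1 - t) * ε₁ + t * ε₂ = ε := by
    rw [htd]
    field_simp
    rw [he]; ring
  have hFt := hDF t ht
  have hkt := hker t ht
  rw [hte] at hFt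
  have hSXt : ((1 - t) • S₁ + t • S₂) * X₁ = 0 := by
    rw [Matrix.add_mul, Matrix.smul_mul, Matrix.smul_mul, hSX₁, hSX₂]; simp
  obtain ⟨hPt, hDt⟩ := aux_opt_of_comp hX₁.1 hFt (by rw [hSXt, Matrix.trace_zero])
  obtain ⟨X, y, S, hm⟩ := aux_maxcomp hSA hεE
  have hXo := intrinsicInterior_subset hm.1
  have hSo := intrinsicInterior_subset hm.2
  have hF : DualFeasible C Cbar A ε y S := hSo.1
  have hXs := aux_symm_of_P hm.1
  have hSs := aux_symm_of_D hm.2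
  refine ⟨X, y, S, hm, le_antisymm ?_ ?_, le_antisymm ?_ ?_⟩
  · apply aux_range_le hX₁.1.1 hXs
    have hz := aux_mul_zero hkt (aux_comp hSA hεE hXo hDt)
    exact aux_max_P hm₁.1 (aux_opt_of_comp hXo.1 hF₁ (by rw [hz, Matrix.trace_zero])).1
  · exact aux_range_le hXs hX₁.1.1 (aux_max_P hm.1 hPt)
  · apply aux_range_le hF₁.1 hSs
    -- choose a parameter on the other side of zero
    set k : ℝ := δ / 4 with hk
    have hk0 : 0 < k := by positivity
    have hs : -(k * t) ∈ Set.Ioo (-δ) (1 + δ) := by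
      obtain ⟨ha, hb⟩ := ht
      constructor <;> nlinarith
    have hFs := hDF _ hs
    have hSX : S * X₁ = 0 := aux_comp hSA hεE hPt hSo
    have hl0 : 0 < k / (1 + k) := by positivity
    have hl1 : 0 ≤ 1 / (1 + k) := by positivity
    have hcomb := aux_dual_comb hF.2.1 hFs.2.1 (a := k / (1 + k)) (c := 1 / (1 + k))
      (by field_simp; ring)
    have hee : k / (1 + k) * ε + 1 / (1 + k) * ((1 - -(k * t)) * ε₁ + -(k * t) * ε₂) = ε₁ := by
      rw [← hte]
      field_simp
      ring
    rw [hee] at hcomb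
    have hF' : DualFeasible C Cbar A ε₁ _ _ :=
      ⟨(hF.1.smul _).add (hFs.1.smul _), hcomb, (hF.2.2.smul hl0.le).add (hFs.2.2.smul hl1)⟩
    have hz : (k / (1 + k)) • S + (1 / (1 + k)) •
        ((1 - -(k * t)) • S₁ + -(k * t) • S₂) = (k / (1 + k)) • S + (1 / (1 + k)) •
        ((1 - -(k * t)) • S₁ + -(k * t) • S₂) := rfl
    have hO := (aux_opt_of_comp hX₁.1 hF' (by
      rw [Matrix.add_mul, Matrix.smul_mul, Matrix.smul_mul, Matrix.add_mul, Matrix.smul_mul,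
        Matrix.smul_mul, hSX₁, hSX₂, hSX]
      simp)).2
    intro v hv
    have hv' := aux_max_D hm₁.2 hO v hv
    have h3 := aux_psd_add_ker (hF.2.2.smul hl0.le) (hFs.2.2.smul hl1) hv'
    rw [Matrix.smul_mulVec] at h3
    exact (smul_eq_zero.1 h3).resolve_left hl0.ne'
  · apply aux_range_le hSs hF₁.1
    intro v hv
    exact hkt v (aux_max_D hm.2 hDt v hv)

lemma aux_unique_P {ε : ℝ} {X X' : Matrix (Fin n) (Fin n) ℝ}
    (hX : X ∈ intrinsicInterior ℝ (PrimalOpt C Cbar A b ε))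
    (hX' : X' ∈ intrinsicInterior ℝ (PrimalOpt C Cbar A b ε)) :
    LinearMap.range X.mulVecLin = LinearMap.range X'.mulVecLin :=
  le_antisymm
    (aux_range_le (aux_symm_of_P hX') (aux_symm_of_P hX)
      (aux_max_P hX' (intrinsicInterior_subset hX)))
    (aux_range_le (aux_symm_of_P hX) (aux_symm_of_P hX')
      (aux_max_P hX (intrinsicInterior_subset hX')))

lemma aux_unique_D {ε : ℝ} {S S' : Matrix (Fin n) (Fin n) ℝ} {y y' : Fin m → ℝ}
    (hX : (y, S) ∈ intrinsicInterior ℝ (DualOpt C Cbar A b ε))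
    (hX' : (y', S') ∈ intrinsicInterior ℝ (DualOpt C Cbar A b ε)) :
    LinearMap.range S.mulVecLin = LinearMap.range S'.mulVecLin :=
  le_antisymm
    (aux_range_le (aux_symm_of_D hX') (aux_symm_of_D hX)
      (aux_max_D hX' (intrinsicInterior_subset hX)))
    (aux_range_le (aux_symm_of_D hX) (aux_symm_of_D hX')
      (aux_max_D hX (intrinsicInterior_subset hX')))

lemma aux_inv (hSA : StandingAssumptions C Cbar A b) {εbar ε₁ ε₂ : ℝ} (hlt : ε₁ < ε₂)
    (h₁ : ε₁ ∈ InvSet C Cbar A b εbar) (h₂ : ε₂ ∈ InvSet C Cbar A b εbar) :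
    ∃ d : ℝ, 0 < d ∧ Set.Ioo (ε₁ - d) (ε₂ + d) ⊆ InvSet C Cbar A b εbar := by
  obtain ⟨hE₁, X₁, y₁, S₁, X₁', y₁', S₁', hm₁, hm₁', hX₁, hS₁⟩ := h₁
  obtain ⟨hE₂, X₂, y₂, S₂, X₂', y₂', S₂', hm₂, hm₂', hX₂, hS₂⟩ := h₂
  have hS : LinearMap.range S₁.mulVecLin = LinearMap.range S₂.mulVecLin := by
    rw [hS₁, hS₂]
    exact aux_unique_D hm₁'.2 hm₂'.2
  have s₁ := aux_symm_of_D hm₁.2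
  have s₂ := aux_symm_of_D hm₂.2
  obtain ⟨d, hd, h⟩ := aux_core hSA hlt hE₁ hm₁ (intrinsicInterior_subset hm₂.2)
    (aux_ker_le s₁ s₂ hS.ge) (aux_ker_le s₂ s₁ hS.le)
  refine ⟨d, hd, fun ε hε => ?_⟩
  obtain ⟨hE, X, y, S, hm, hXr, hSr⟩ := h ε hε
  exact ⟨hE, X, y, S, X₁', y₁', S₁', hm, hm₁', hXr.trans hX₁, hSr.trans hS₁⟩

end sdp

end helpers

/-- every invariancy set is either a singleton or an open interval. -/
theorem stmt1 {n m : ℕ} (C Cbar : Matrix (Fin n) (Fin n) ℝ)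
    (A : Fin m → Matrix (Fin n) (Fin n) ℝ) (b : Fin m → ℝ)
    (hSA : StandingAssumptions C Cbar A b)
    (εbar : ℝ) (hεbar : εbar ∈ interior (Eset C Cbar A b)) :
    (∃ a : ℝ, InvSet C Cbar A b εbar = {a}) ∨
      ((InvSet C Cbar A b εbar).Nonempty ∧ IsOpen (InvSet C Cbar A b εbar) ∧
        (InvSet C Cbar A b εbar).OrdConnected) := by
  have hself : εbar ∈ InvSet C Cbar A b εbar := by
    obtain ⟨X, y, S, hm⟩ := aux_maxcomp hSA hεbar
    exact ⟨hεbar, X, y, S, X, y, S, hm, hm, rfl, rfl⟩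
  by_cases hsing : ∃ a : ℝ, InvSet C Cbar A b εbar = {a}
  · exact Or.inl hsing
  right
  refine ⟨⟨_, hself⟩, ?_, ?_⟩
  · rw [Metric.isOpen_iff]
    intro x hx
    have hex : ∃ z ∈ InvSet C Cbar A b εbar, z ≠ x := by
      by_contra hcon
      push Not at hcon
      exact hsing ⟨x, Set.eq_singleton_iff_unique_mem.2 ⟨hx, hcon⟩⟩
    obtain ⟨z, hz, hne⟩ := hex
    rcases lt_or_gt_of_ne hne with hlt | hlt
    · obtain ⟨d, hd, h⟩ := aux_inv hSA hlt hz hx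
      refine ⟨min d (x - z), lt_min hd (by linarith), fun u hu => h ?_⟩
      rw [Metric.mem_ball, Real.dist_eq, abs_lt] at hu
      have h1 := min_le_left d (x - z)
      have h2 := min_le_right d (x - z)
      constructor <;> linarith [hu.1, hu.2]
    · obtain ⟨d, hd, h⟩ := aux_inv hSA hlt hx hz
      refine ⟨min d (z - x), lt_min hd (by linarith), fun u hu => h ?_⟩
      rw [Metric.mem_ball, Real.dist_eq, abs_lt] at hu
      have h1 := min_le_left d (z - x)
      have h2 := min_le_right d (z - x)
      constructor <;> linarith [hu.1, hu.2]
  · constructor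
    intro x hx z hz u hu
    rcases eq_or_lt_of_le (hu.1.trans hu.2) with heq | hlt
    · have : u = x := le_antisymm (heq ▸ hu.2) hu.1
      rwa [this]
    · obtain ⟨d, hd, h⟩ := aux_inv hSA hlt hx hz
      exact h ⟨by linarith [hu.1], by linarith [hu.2]⟩
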